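/- arXiv:2511.15436 — 2 statements merged into one kernel-verified Lean document; each statement's English description precedes it below -/
import Mathlib

section
/- The following are equivalent: (i) M_F is second countable; (ii) M_F is separable and μ is hemifinite; (iii) M_F is Lindelöf and μ is hemifinite; (iv) M_F satisfies the countable chain condition (every pairwise disjoint family of nonempty open subsets of M_F is countable) and μ is hemifinite. -/
open MeasureTheory Topology Set Pointwise

/-- The set of all real-valued measurable functions on `X`, as a subtype. -/
abbrev Mble (X : Type*) [MeasurableSpace X] : Type _ := {f : X → ℝ // Measurable f}

/-- The basic set `B(f, A, ε)`: all `g` such that for some measurable null set `N`,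
`sup_{x ∈ A \ N} |f x - g x| < ε`. -/
def FBall {X : Type*} [MeasurableSpace X] (μ : Measure X) (f : Mble X) (A : Set X)
    (ε : ℝ) : Set (Mble X) :=
  {g | ∃ N : Set X, MeasurableSet N ∧ μ N = 0 ∧
        ∃ b : ℝ, b < ε ∧ ∀ x ∈ A \ N, |f.1 x - g.1 x| ≤ b}

/-- The `F_μ`-topology on `Mble X`, generated by the sets `B(f, A, ε)` with
`A` measurable of finite measure and `ε > 0`. -/
def FTop {X : Type*} [MeasurableSpace X] (μ : Measure X) : TopologicalSpace (Mble X) :=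
  TopologicalSpace.generateFrom
    {S | ∃ (f : Mble X) (A : Set X) (ε : ℝ),
        MeasurableSet A ∧ μ A < ⊤ ∧ 0 < ε ∧ S = FBall μ f A ε}

/-- A `μ`-atom: a measurable set of positive measure admitting no decomposition into two
disjoint measurable pieces of positive measure. -/
def MuAtom {X : Type*} [MeasurableSpace X] (μ : Measure X) (A : Set X) : Prop :=
  MeasurableSet A ∧ 0 < μ A ∧
    ¬ ∃ B C : Set X, MeasurableSet B ∧ MeasurableSet C ∧ Disjoint B C ∧
        B ∪ C = A ∧ 0 < μ B ∧ 0 < μ C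

/-- `G` is a union of finitely many `μ`-atoms. -/
def FinAtomUnion {X : Type*} [MeasurableSpace X] (μ : Measure X) (G : Set X) : Prop :=
  ∃ (n : ℕ) (F : Fin n → Set X), (∀ i, MuAtom μ (F i)) ∧ G = ⋃ i, F i

/-- `L^∞_G`: the measurable functions that are essentially bounded on `G`. -/
def Linf {X : Type*} [MeasurableSpace X] (μ : Measure X) (G : Set X) : Set (Mble X) :=
  {f | ∃ M₀ : ℝ, 0 < M₀ ∧ ∃ N : Set X, MeasurableSet N ∧ μ N = 0 ∧
        ∀ x ∈ G \ N, |f.1 x| ≤ M₀}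

/-- The intersection `⋂_{G ∈ 𝒜_>} L^∞_G`. -/
def InterLinf {X : Type*} [MeasurableSpace X] (μ : Measure X) : Set (Mble X) :=
  ⋂ G ∈ {A : Set X | MeasurableSet A ∧ 0 < μ A ∧ μ A < ⊤}, Linf μ G

/-- The zero function as an element of `Mble X`. -/
def zeroM {X : Type*} [MeasurableSpace X] : Mble X := ⟨fun _ => 0, measurable_const⟩

/-- `μ` is hemifinite: some sequence in `𝒜_>` almost contains every member of `𝒜_>`. -/
def Hemifinite {X : Type*} [MeasurableSpace X] (μ : Measure X) : Prop :=
  ∃ A : ℕ → Set X, (∀ n, MeasurableSet (A n) ∧ 0 < μ (A n) ∧ μ (A n) < ⊤) ∧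
    ∀ F : Set X, MeasurableSet F → 0 < μ F → μ F < ⊤ → ∃ n, μ (F \ A n) = 0

/-- `G⁺`: functions strictly positive μ-almost everywhere on `G`. -/
def Gplus {X : Type*} [MeasurableSpace X] (μ : Measure X) (G : Set X) : Set (Mble X) :=
  {f | ∃ N : Set X, MeasurableSet N ∧ μ N = 0 ∧ ∀ x ∈ G \ N, 0 < f.1 x}

/-- `G⁰`: functions nonnegative μ-almost everywhere on `G`. -/
def Gzero {X : Type*} [MeasurableSpace X] (μ : Measure X) (G : Set X) : Set (Mble X) :=
  {f | ∃ N : Set X, MeasurableSet N ∧ μ N = 0 ∧ ∀ x ∈ G \ N, 0 ≤ f.1 x}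

instance {X : Type*} [MeasurableSpace X] : Add (Mble X) :=
  ⟨fun f g => ⟨f.1 + g.1, f.2.add g.2⟩⟩

theorem mem_FBall_iff {X : Type*} [MeasurableSpace X] (μ : Measure X) (f g : Mble X) (A : Set X)
    (ε : ℝ) : g ∈ FBall μ f A ε ↔ ∃ b : ℝ, b < ε ∧ ∀ᵐ x ∂μ, x ∈ A → |f.1 x - g.1 x| ≤ b := by
  constructor
  · rintro ⟨N, hN, hN0, b, hb, h⟩
    refine ⟨b, hb, ?_⟩
    have : ∀ᵐ x ∂μ, x ∉ N := measure_eq_zero_iff_ae_notMem.1 hN0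
    filter_upwards [this] with x hx hxA
    exact h x ⟨hxA, hx⟩
  · rintro ⟨b, hb, h⟩
    obtain ⟨N, hsub, hN, hN0⟩ := exists_measurable_superset_of_null (ae_iff.1 h)
    refine ⟨N, hN, hN0, b, hb, ?_⟩
    rintro x ⟨hxA, hxN⟩
    by_contra hc
    exact hxN (hsub (fun h => hc (h hxA)))

theorem FBall_self {X : Type*} [MeasurableSpace X] (μ : Measure X) (f : Mble X) (A : Set X)
    {ε : ℝ} (hε : 0 < ε) : f ∈ FBall μ f A ε :=
  (mem_FBall_iff μ f f A ε).2 ⟨0, hε, by simp⟩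

theorem FBall_symm {X : Type*} [MeasurableSpace X] {μ : Measure X} {f g : Mble X} {A : Set X}
    {ε : ℝ} (h : g ∈ FBall μ f A ε) : f ∈ FBall μ g A ε := by
  rw [mem_FBall_iff] at *
  simpa only [abs_sub_comm] using h

theorem FBall_trans {X : Type*} [MeasurableSpace X] {μ : Measure X} {f g h : Mble X} {A B : Set X}
    {b δ : ℝ} (hB : μ (A \ B) = 0) (hfg : ∀ᵐ x ∂μ, x ∈ A → |f.1 x - g.1 x| ≤ b)
    (hgh : h ∈ FBall μ g B δ) : ∃ c, c < b + δ ∧ ∀ᵐ x ∂μ, x ∈ A → |f.1 x - h.1 x| ≤ c := by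
  rw [mem_FBall_iff] at hgh
  obtain ⟨c, hc, hgh⟩ := hgh
  refine ⟨b + c, by linarith, ?_⟩
  have : ∀ᵐ x ∂μ, x ∉ A \ B := measure_eq_zero_iff_ae_notMem.1 hB
  filter_upwards [this, hfg, hgh] with x h1 h2 h3 hA
  have hxB : x ∈ B := by
    by_contra hn
    exact h1 ⟨hA, hn⟩
  have := abs_sub_le (f.1 x) (g.1 x) (h.1 x)
  linarith [h2 hA, h3 hxB]

theorem isOpen_FBall {X : Type*} [MeasurableSpace X] (μ : Measure X) (f : Mble X) {A : Set X}
    {ε : ℝ} (hA : MeasurableSet A) (hA' : μ A < ⊤) (hε : 0 < ε) :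
    IsOpen[FTop μ] (FBall μ f A ε) :=
  TopologicalSpace.isOpen_generateFrom_of_mem ⟨f, A, ε, hA, hA', hε, rfl⟩

theorem exists_FBall_subset {X : Type*} [MeasurableSpace X] (μ : Measure X) (U : Set (Mble X))
    (hU : IsOpen[FTop μ] U) (g : Mble X) (hg : g ∈ U) :
    ∃ (A : Set X) (ε : ℝ), MeasurableSet A ∧ μ A < ⊤ ∧ 0 < ε ∧ FBall μ g A ε ⊆ U := by
  induction hU with
  | basic S hS =>
    obtain ⟨f, A, ε, hA, hA', hε, rfl⟩ := hS
    obtain ⟨b, hb, h⟩ := (mem_FBall_iff μ f g A ε).1 hg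
    refine ⟨A, ε - b, hA, hA', by linarith, fun k hk => ?_⟩
    obtain ⟨c, hc, h'⟩ := FBall_trans (A := A) (B := A) (by simp) h hk
    exact (mem_FBall_iff μ f k A ε).2 ⟨c, by linarith, h'⟩
  | univ => exact ⟨∅, 1, MeasurableSet.empty, by simp, one_pos, subset_univ _⟩
  | inter S T _ _ ihS ihT =>
    obtain ⟨A, ε, hA, hA', hε, h1⟩ := ihS hg.1
    obtain ⟨B, δ, hB, hB', hδ, h2⟩ := ihT hg.2
    refine ⟨A ∪ B, min ε δ, hA.union hB, measure_union_lt_top hA' hB', lt_min hε hδ, ?_⟩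
    intro k hk
    obtain ⟨b, hb, h⟩ := (mem_FBall_iff μ _ _ _ _).1 hk
    refine ⟨h1 ((mem_FBall_iff μ _ _ _ _).2 ⟨b, hb.trans_le (min_le_left _ _), ?_⟩),
      h2 ((mem_FBall_iff μ _ _ _ _).2 ⟨b, hb.trans_le (min_le_right _ _), ?_⟩)⟩
    · filter_upwards [h] with x hx hxA using hx (Or.inl hxA)
    · filter_upwards [h] with x hx hxA using hx (Or.inr hxA)
  | sUnion S _ ih =>
    obtain ⟨T, hT, hgT⟩ := hg
    obtain ⟨A, ε, hA, hA', hε, h1⟩ := ih T hT hgT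
    exact ⟨A, ε, hA, hA', hε, h1.trans (subset_sUnion_of_mem hT)⟩

/-- Countable approximation property. -/
def CtblNet {X : Type*} [MeasurableSpace X] (μ : Measure X) : Prop :=
  ∀ (A : Set X) (ε : ℝ), MeasurableSet A → μ A < ⊤ → 0 < ε →
    ∃ D : Set (Mble X), D.Countable ∧ ∀ f, ∃ d ∈ D, d ∈ FBall μ f A ε

theorem secondCountable_of_net {X : Type*} [MeasurableSpace X] (μ : Measure X)
    (hnet : CtblNet μ) (hemi : Hemifinite μ) : @SecondCountableTopology (Mble X) (FTop μ) := by
  obtain ⟨A, hA, hemi⟩ := hemi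
  have hk : ∀ k : ℕ, (0 : ℝ) < 1 / ((k : ℝ) + 1) := fun k => Nat.one_div_pos_of_nat
  choose D hDc hD using fun (n k : ℕ) => hnet (A n) (1 / ((k : ℝ) + 1)) (hA n).1 (hA n).2.2 (hk k)
  let 𝒞 : Set (Set (Mble X)) :=
    ⋃ n : ℕ, ⋃ k : ℕ, (fun d => FBall μ d (A n) (1 / ((k : ℝ) + 1))) '' D n k
  have hC : 𝒞.Countable :=
    countable_iUnion fun n => countable_iUnion fun k => (hDc n k).image _
  refine @SecondCountableTopology.mk _ (FTop μ) ⟨𝒞, hC, ?_⟩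
  apply le_antisymm
  · apply le_generateFrom
    intro S hS
    simp only [𝒞, mem_iUnion, mem_image] at hS
    obtain ⟨n, k, d, -, rfl⟩ := hS
    exact isOpen_FBall μ d (hA n).1 (hA n).2.2 (hk k)
  · apply le_generateFrom
    rintro S ⟨f, F, ε, hF, hF', hε, rfl⟩
    refine (@isOpen_iff_forall_mem_open _ (TopologicalSpace.generateFrom 𝒞) _).2 ?_
    intro g hg
    obtain ⟨b, hb, h⟩ := (mem_FBall_iff μ _ _ _ _).1 hg
    obtain ⟨n, hn⟩ : ∃ n, μ (F \ A n) = 0 := by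
      rcases eq_or_ne (μ F) 0 with h0 | h0
      · exact ⟨0, measure_mono_null diff_subset h0⟩
      · exact hemi F hF (pos_iff_ne_zero.2 h0) hF'
    obtain ⟨k, hk'⟩ := exists_nat_one_div_lt (show 0 < (ε - b) / 2 by linarith)
    obtain ⟨d, hd, hdg⟩ := hD n k g
    refine ⟨FBall μ d (A n) (1 / ((k : ℝ) + 1)), ?_, ?_, FBall_symm hdg⟩
    · intro k' hk''
      obtain ⟨c, hc, h1⟩ := FBall_trans hn h hdg
      obtain ⟨c', hc', h2⟩ := FBall_trans hn h1 hk''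
      exact (mem_FBall_iff μ _ _ _ _).2 ⟨c', by linarith, h2⟩
    · apply TopologicalSpace.isOpen_generateFrom_of_mem
      simp only [𝒞, mem_iUnion]
      exact ⟨n, k, mem_image_of_mem _ hd⟩

theorem hemifinite_of_secondCountable {X : Type*} [MeasurableSpace X] (μ : Measure X)
    (hpos : 0 < μ Set.univ)
    (hsub : ∀ A : Set X, MeasurableSet A → μ A = ⊤ →
      ∃ B, B ⊆ A ∧ MeasurableSet B ∧ 0 < μ B ∧ μ B < ⊤)
    (hsc : @SecondCountableTopology (Mble X) (FTop μ)) : Hemifinite μ := by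
  let := FTop μ
  obtain ⟨C, hC, hC0, hC1⟩ : ∃ C, MeasurableSet C ∧ 0 < μ C ∧ μ C < ⊤ := by
    by_cases h : μ univ = ⊤
    · obtain ⟨B, -, hB⟩ := hsub univ MeasurableSet.univ h
      exact ⟨B, hB⟩
    · exact ⟨univ, MeasurableSet.univ, hpos, lt_top_iff_ne_top.2 h⟩
  obtain ⟨V, hV⟩ := (𝓝 (zeroM : Mble X)).exists_antitone_basis
  have key : ∀ n, ∃ (A : Set X) (ε : ℝ), MeasurableSet A ∧ μ A < ⊤ ∧ 0 < ε ∧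
      FBall μ zeroM A ε ⊆ V n := by
    intro n
    obtain ⟨U, hUV, hU, h0⟩ := mem_nhds_iff.1 (hV.mem n)
    obtain ⟨A, ε, h1, h2, h3, h4⟩ := exists_FBall_subset μ U hU zeroM h0
    exact ⟨A, ε, h1, h2, h3, h4.trans hUV⟩
  choose A ε hA hA' hε hAV using key
  refine ⟨fun n => A n ∪ C, fun n => ⟨(hA n).union hC,
    hC0.trans_le (measure_mono subset_union_right), measure_union_lt_top (hA' n) hC1⟩, ?_⟩
  intro F hF _ hF'
  have hmem : FBall μ zeroM F 1 ∈ 𝓝 (zeroM : Mble X) :=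
    (isOpen_FBall μ zeroM hF hF' one_pos).mem_nhds (FBall_self μ zeroM F one_pos)
  obtain ⟨n, hn⟩ := hV.mem_iff.1 hmem
  refine ⟨n, measure_mono_null (diff_subset_diff_right subset_union_left) ?_⟩
  let g : Mble X := ⟨(F \ A n).indicator (fun _ => 2),
    measurable_const.indicator (hF.diff (hA n))⟩
  have hg : g ∈ FBall μ zeroM (A n) (ε n) := by
    refine (mem_FBall_iff μ _ _ _ _).2 ⟨0, hε n, Filter.Eventually.of_forall fun x hx => ?_⟩
    have : x ∉ F \ A n := fun h => h.2 hx
    simp [g, zeroM, indicator_of_notMem this]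
  obtain ⟨b, hb, h⟩ := (mem_FBall_iff μ _ _ _ _).1 (hn (hAV n hg))
  rw [measure_eq_zero_iff_ae_notMem]
  filter_upwards [h] with x hx hxF
  have := hx hxF.1
  simp only [g, zeroM, indicator_of_mem hxF] at this
  norm_num at this
  linarith

theorem net_of_separable {X : Type*} [MeasurableSpace X] (μ : Measure X)
    (h : @TopologicalSpace.SeparableSpace (Mble X) (FTop μ)) : CtblNet μ := by
  let := FTop μ
  intro A ε hA hA' hε
  obtain ⟨D, hDc, hD⟩ := TopologicalSpace.exists_countable_dense (Mble X)
  refine ⟨D, hDc, fun f => ?_⟩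
  obtain ⟨d, hd, hd'⟩ := hD.exists_mem_open (isOpen_FBall μ f hA hA' hε) ⟨f, FBall_self μ f A hε⟩
  exact ⟨d, by assumption, by assumption⟩

theorem net_of_lindelof {X : Type*} [MeasurableSpace X] (μ : Measure X)
    (h : @LindelofSpace (Mble X) (FTop μ)) : CtblNet μ := by
  let := FTop μ
  intro A ε hA hA' hε
  obtain ⟨D, hDc, hD⟩ := LindelofSpace.elim_nhds_subcover (fun f : Mble X => FBall μ f A ε)
    (fun f => (isOpen_FBall μ f hA hA' hε).mem_nhds (FBall_self μ f A hε))
  refine ⟨D, hDc, fun f => ?_⟩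
  have : f ∈ ⋃ x ∈ D, FBall μ x A ε := hD ▸ mem_univ f
  simp only [mem_iUnion] at this
  obtain ⟨d, hd, hfd⟩ := this
  exact ⟨d, hd, FBall_symm hfd⟩

theorem net_of_ccc {X : Type*} [MeasurableSpace X] (μ : Measure X)
    (h : ∀ 𝒰 : Set (Set (Mble X)), (∀ U ∈ 𝒰, IsOpen[FTop μ] U ∧ U.Nonempty) →
          𝒰.Pairwise Disjoint → 𝒰.Countable) : CtblNet μ := by
  intro A ε hA hA' hε
  obtain ⟨D, hD⟩ := zorn_subset {D : Set (Mble X) | D.Pairwise fun f g => g ∉ FBall μ f A ε} (by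
    intro c hc hchain
    refine ⟨⋃₀ c, ?_, fun s hs => subset_sUnion_of_mem hs⟩
    exact (pairwise_sUnion hchain.directedOn).2 fun s hs => hc hs)
  have hdisj : D.Pairwise fun f g => Disjoint (FBall μ f A (ε / 2)) (FBall μ g A (ε / 2)) := by
    intro f hf g hg hfg
    rw [Set.disjoint_left]
    intro k hk1 hk2
    obtain ⟨b, hb, h1⟩ := (mem_FBall_iff μ _ _ _ _).1 hk1
    obtain ⟨c, hc, h2⟩ := FBall_trans (A := A) (B := A) (by simp) h1 (FBall_symm hk2)
    exact hD.prop hf hg hfg ((mem_FBall_iff μ _ _ _ _).2 ⟨c, by linarith, h2⟩)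
  have hε2 : 0 < ε / 2 := by linarith
  have hinj : D.InjOn (fun f => FBall μ f A (ε / 2)) := by
    intro f hf g hg hfg
    by_contra hne
    have h1 : Disjoint (FBall μ f A (ε / 2)) (FBall μ g A (ε / 2)) := hdisj hf hg hne
    have hfg : FBall μ f A (ε / 2) = FBall μ g A (ε / 2) := hfg
    rw [← hfg] at h1
    exact Set.disjoint_left.1 h1 (FBall_self μ f A hε2) (FBall_self μ f A hε2)
  refine ⟨D, ?_, fun f => ?_⟩
  · refine countable_of_injective_of_countable_image hinj (h _ ?_ ?_)
    · rintro _ ⟨f, -, rfl⟩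
      exact ⟨isOpen_FBall μ f hA hA' hε2, f, FBall_self μ f A hε2⟩
    · rintro _ ⟨f, hf, rfl⟩ _ ⟨g, hg, rfl⟩ hne
      exact hdisj hf hg (fun h => hne (by rw [h]))
  · by_contra! hcon
    have hins : insert f D ∈ {D : Set (Mble X) | D.Pairwise fun f g => g ∉ FBall μ f A ε} := by
      refine Set.Pairwise.insert hD.prop fun g hg _ => ⟨hcon g hg, fun h => hcon g hg (FBall_symm h)⟩
    have : f ∈ D := hD.le_of_ge hins (subset_insert f D) (mem_insert f D)
    exact hcon f this (FBall_self μ f A hε)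

theorem ccc_of_secondCountable {X : Type*} [MeasurableSpace X] (μ : Measure X)
    (hsc : @SecondCountableTopology (Mble X) (FTop μ)) :
    ∀ 𝒰 : Set (Set (Mble X)), (∀ U ∈ 𝒰, IsOpen[FTop μ] U ∧ U.Nonempty) →
          𝒰.Pairwise Disjoint → 𝒰.Countable := by
  let := FTop μ
  intro 𝒰 h1 h2
  exact Set.PairwiseDisjoint.countable_of_isOpen (s := id) h2 (fun U hU => (h1 U hU).1)
    (fun U hU => (h1 U hU).2)

/-- `M_F` is second countable iff it is separable and `μ` is hemifinite,
iff it is Lindelöf and `μ` is hemifinite, iff it satisfies the countable chain condition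
and `μ` is hemifinite. -/
theorem stmt18 {X : Type*} [MeasurableSpace X] (μ : Measure X)
    (hpos : 0 < μ Set.univ)
    (hsub : ∀ A : Set X, MeasurableSet A → μ A = ⊤ →
      ∃ B, B ⊆ A ∧ MeasurableSet B ∧ 0 < μ B ∧ μ B < ⊤) :
    (@SecondCountableTopology (Mble X) (FTop μ) ↔
      (@TopologicalSpace.SeparableSpace (Mble X) (FTop μ) ∧ Hemifinite μ)) ∧
    (@SecondCountableTopology (Mble X) (FTop μ) ↔
      (@LindelofSpace (Mble X) (FTop μ) ∧ Hemifinite μ)) ∧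
    (@SecondCountableTopology (Mble X) (FTop μ) ↔
      ((∀ 𝒰 : Set (Set (Mble X)), (∀ U ∈ 𝒰, IsOpen[FTop μ] U ∧ U.Nonempty) →
          𝒰.Pairwise Disjoint → 𝒰.Countable) ∧ Hemifinite μ)) := by
  have hh := hemifinite_of_secondCountable μ hpos hsub
  refine ⟨⟨fun h => ⟨?_, hh h⟩, fun h => secondCountable_of_net μ (net_of_separable μ h.1) h.2⟩,
    ⟨fun h => ⟨?_, hh h⟩, fun h => secondCountable_of_net μ (net_of_lindelof μ h.1) h.2⟩,
    ⟨fun h => ⟨ccc_of_secondCountable μ h, hh h⟩,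
      fun h => secondCountable_of_net μ (net_of_ccc μ h.1) h.2⟩⟩
  · let := FTop μ
    infer_instance
  · let := FTop μ
    infer_instance
end

section
/- The following are equivalent: (i) μ is hemifinite; (ii) M_F is a Fréchet–Urysohn space; (iii) M_F is a sequential space. -/
open MeasureTheory Topology Set Pointwise

theorem fball_isOpen {X : Type*} [MeasurableSpace X] (μ : Measure X) (f : Mble X) (A : Set X)
    (ε : ℝ) (hA : MeasurableSet A) (hf : μ A < ⊤) (hε : 0 < ε) :
    IsOpen[FTop μ] (FBall μ f A ε) :=
  TopologicalSpace.isOpen_generateFrom_of_mem ⟨f, A, ε, hA, hf, hε, rfl⟩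

theorem fball_self {X : Type*} [MeasurableSpace X] (μ : Measure X) (f : Mble X) (A : Set X)
    (ε : ℝ) (hε : 0 < ε) : f ∈ FBall μ f A ε :=
  ⟨∅, MeasurableSet.empty, measure_empty, 0, hε, fun x _ => by simp⟩

theorem fball_mem_nhds {X : Type*} [MeasurableSpace X] (μ : Measure X) (f : Mble X) (A : Set X)
    (ε : ℝ) (hA : MeasurableSet A) (hf : μ A < ⊤) (hε : 0 < ε) :
    FBall μ f A ε ∈ @nhds _ (FTop μ) f := by
  letI := FTop μ
  exact IsOpen.mem_nhds (fball_isOpen μ f A ε hA hf hε) (fball_self μ f A ε hε)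

theorem fball_mono {X : Type*} [MeasurableSpace X] (μ : Measure X) (f : Mble X) {A A' : Set X}
    {ε ε' : ℝ} (hA : MeasurableSet A) (hA' : MeasurableSet A') (h : μ (A \ A') = 0)
    (he : ε' ≤ ε) : FBall μ f A' ε' ⊆ FBall μ f A ε := by
  rintro g ⟨N, hN, hN0, b, hb, hg⟩
  refine ⟨N ∪ (A \ A'), hN.union (hA.diff hA'), measure_union_null hN0 h, b, by linarith, ?_⟩
  rintro x ⟨hx, hx'⟩
  apply hg
  simp only [mem_union, mem_diff, not_or, not_and, not_not] at hx'
  exact ⟨hx'.2 hx, hx'.1⟩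

theorem exists_fball {X : Type*} [MeasurableSpace X] (μ : Measure X) (U : Set (Mble X))
    (hU : IsOpen[FTop μ] U) : ∀ f ∈ U, ∃ (A : Set X) (ε : ℝ), MeasurableSet A ∧ μ A < ⊤ ∧ 0 < ε ∧
      FBall μ f A ε ⊆ U := by
  change TopologicalSpace.GenerateOpen _ U at hU
  induction hU with
  | basic s hs =>
    obtain ⟨g, A, ε, hA, hAf, hε, rfl⟩ := hs
    rintro f ⟨N, hN, hN0, b, hb, hg⟩
    refine ⟨A, ε - b, hA, hAf, by linarith, ?_⟩
    rintro k ⟨N', hN', hN0', b', hb', hk⟩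
    refine ⟨N ∪ N', hN.union hN', measure_union_null hN0 hN0', b + b', by linarith, ?_⟩
    rintro x ⟨hx, hx'⟩
    simp only [mem_union, not_or] at hx'
    have h1 := hg x ⟨hx, hx'.1⟩
    have h2 := hk x ⟨hx, hx'.2⟩
    have h3 := abs_sub_le (g.1 x) (f.1 x) (k.1 x)
    linarith
  | univ => exact fun f _ => ⟨∅, 1, MeasurableSet.empty, by simp, one_pos, subset_univ _⟩
  | inter s t _ _ hs ht =>
    rintro f ⟨h1, h2⟩
    obtain ⟨A, ε, hA, hAf, hε, hs⟩ := hs f h1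
    obtain ⟨A', ε', hA', hAf', hε', ht⟩ := ht f h2
    refine ⟨A ∪ A', min ε ε', hA.union hA', measure_union_lt_top hAf hAf', lt_min hε hε', ?_⟩
    refine subset_inter ?_ ?_
    · exact (fball_mono μ f hA (hA.union hA') (by simp [diff_eq_empty.2]) (min_le_left _ _)).trans hs
    · exact (fball_mono μ f hA' (hA.union hA') (by simp [diff_eq_empty.2]) (min_le_right _ _)).trans ht
  | sUnion S _ ih =>
    rintro f ⟨s, hs, hf⟩
    obtain ⟨A, ε, hA, hAf, hε, h⟩ := ih s hs f hf
    exact ⟨A, ε, hA, hAf, hε, h.trans (subset_sUnion_of_mem hs)⟩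

theorem hemi_first {X : Type*} [MeasurableSpace X] (μ : Measure X) (h : Hemifinite μ) :
    @FirstCountableTopology _ (FTop μ) := by
  letI := FTop μ
  obtain ⟨A, hA, hF⟩ := h
  refine ⟨fun f => ?_⟩
  have : (𝓝 f).HasBasis (fun _ : ℕ × ℕ => True)
      (fun p => FBall μ f (A p.1) (1 / ((p.2 : ℝ) + 1))) := by
    refine ⟨fun t => ⟨fun ht => ?_, ?_⟩⟩
    · obtain ⟨U, hUt, hU, hfU⟩ := mem_nhds_iff.1 ht
      obtain ⟨B, ε, hB, hBf, hε, hs⟩ := exists_fball μ U hU f hfU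
      obtain ⟨k, hk⟩ := exists_nat_one_div_lt hε
      have : ∃ n, μ (B \ A n) = 0 := by
        by_cases h0 : μ B = 0
        · exact ⟨0, measure_mono_null diff_subset h0⟩
        · exact hF B hB (pos_iff_ne_zero.2 h0) hBf
      obtain ⟨n, hn⟩ := this
      exact ⟨(n, k), trivial, ((fball_mono μ f hB (hA n).1 hn hk.le).trans hs).trans hUt⟩
    · rintro ⟨⟨n, k⟩, -, h⟩
      exact Filter.mem_of_superset
        (fball_mem_nhds μ f (A n) _ (hA n).1 (hA n).2.2 (by positivity)) h
  exact Filter.HasCountableBasis.isCountablyGenerated ⟨this, Set.to_countable _⟩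

/-- Functions whose strict sublevel sets below level one are countably covered. -/
def coveredSet {X : Type*} [MeasurableSpace X] (μ : Measure X) : Set (Mble X) :=
  {f | ∃ A : ℕ → Set X, (∀ n, MeasurableSet (A n) ∧ μ (A n) < ⊤) ∧ ∀ c : ℝ, c < 1 →
    ∀ F : Set X, MeasurableSet F → μ F < ⊤ → (∀ x ∈ F, f.1 x < c) → ∃ n, μ (F \ A n) = 0}

theorem covered_seq {X : Type*} [MeasurableSpace X] (μ : Measure X) :
    @IsSeqClosed _ (FTop μ) (coveredSet μ) := by
  letI := FTop μ
  intro u f hu hf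
  choose A hA hcov using hu
  refine ⟨fun k => A k.unpair.1 k.unpair.2, fun k => hA _ _, ?_⟩
  intro c hc F hF hFf hlt
  have hev := hf (fball_mem_nhds μ f F ((1 - c) / 2) hF hFf (by linarith))
  obtain ⟨n, N, hN, hN0, b, hb, hn⟩ := (Filter.mem_map.1 hev |> Filter.Eventually.exists)
  obtain ⟨m, hm⟩ := hcov n ((1 + c) / 2) (by linarith) (F \ N) (hF.diff hN)
    ((measure_mono diff_subset).trans_lt hFf) (by
      intro x hx
      have h1 := hn x hx
      have h2 := hlt x hx.1
      have h3 := abs_le.1 h1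
      linarith)
  refine ⟨Nat.pair n m, ?_⟩
  simp only [Nat.unpair_pair]
  refine measure_mono_null ?_ (measure_union_null hN0 hm)
  rintro x ⟨hx, hx'⟩
  by_cases hxN : x ∈ N
  · exact Or.inl hxN
  · exact Or.inr ⟨⟨hx, hxN⟩, hx'⟩

theorem seq_hemi {X : Type*} [MeasurableSpace X] (μ : Measure X)
    (hpos : 0 < μ Set.univ)
    (hsub : ∀ A : Set X, MeasurableSet A → μ A = ⊤ →
      ∃ B, B ⊆ A ∧ MeasurableSet B ∧ 0 < μ B ∧ μ B < ⊤)
    (hs : @SequentialSpace (Mble X) (FTop μ)) : Hemifinite μ := by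
  classical
  letI := FTop μ
  have hP : ∃ P : Set X, MeasurableSet P ∧ 0 < μ P ∧ μ P < ⊤ := by
    by_cases h : μ univ = ⊤
    · obtain ⟨B, -, hB⟩ := hsub _ MeasurableSet.univ h
      exact ⟨B, hB⟩
    · exact ⟨univ, MeasurableSet.univ, hpos, lt_top_iff_ne_top.2 h⟩
  have hcl : IsClosed (coveredSet μ) := (covered_seq μ).isClosed
  have h0 : (zeroM : Mble X) ∈ coveredSet μ := by
    rw [← hcl.closure_eq, mem_closure_iff]
    intro U hU h0
    obtain ⟨A, ε, hA, hAf, hε, hsU⟩ := exists_fball μ U hU _ h0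
    refine ⟨⟨Aᶜ.indicator (fun _ => (1 : ℝ)), measurable_const.indicator hA.compl⟩, hsU ?_, ?_⟩
    · refine ⟨∅, MeasurableSet.empty, measure_empty, 0, hε, ?_⟩
      rintro x ⟨hx, -⟩
      simp [zeroM, hx]
    · refine ⟨fun _ => A, fun _ => ⟨hA, hAf⟩, fun c hc F hF hFf hlt => ⟨0, ?_⟩⟩
      have : F \ A = ∅ := by
        ext x
        simp only [mem_diff, mem_empty_iff_false, iff_false, not_and, not_not]
        intro hx
        by_contra hxA
        have := hlt x hx
        simp [hxA] at this
        linarith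
      rw [this, measure_empty]
  obtain ⟨A, hA, hcov⟩ := h0
  obtain ⟨P, hPm, hP0, hPf⟩ := hP
  refine ⟨fun n => if μ (A n) = 0 then P else A n, fun n => ?_, fun F hF hF0 hFf => ?_⟩
  · dsimp only
    split_ifs with h
    · exact ⟨hPm, hP0, hPf⟩
    · exact ⟨(hA n).1, pos_iff_ne_zero.2 h, (hA n).2⟩
  · obtain ⟨n, hn⟩ := hcov (1 / 2) (by norm_num) F hF hFf (fun x _ => by simp [zeroM])
    refine ⟨n, ?_⟩
    have : μ (A n) ≠ 0 := by
      intro h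
      refine hF0.ne' (measure_mono_null ?_ (measure_union_null h hn))
      intro x hx
      by_cases hxN : x ∈ A n
      · exact Or.inl hxN
      · exact Or.inr ⟨hx, hxN⟩
    simpa [this] using hn

/-- `μ` is hemifinite iff `M_F` is Fréchet–Urysohn iff `M_F` is
sequential. -/
theorem stmt19 {X : Type*} [MeasurableSpace X] (μ : Measure X)
    (hpos : 0 < μ Set.univ)
    (hsub : ∀ A : Set X, MeasurableSet A → μ A = ⊤ →
      ∃ B, B ⊆ A ∧ MeasurableSet B ∧ 0 < μ B ∧ μ B < ⊤) :
    (Hemifinite μ ↔ @FrechetUrysohnSpace (Mble X) (FTop μ)) ∧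
    (Hemifinite μ ↔ @SequentialSpace (Mble X) (FTop μ)) := by
  have h1 : Hemifinite μ → @FrechetUrysohnSpace (Mble X) (FTop μ) := fun h =>
    @FirstCountableTopology.frechetUrysohnSpace _ (FTop μ) (hemi_first μ h)
  have h2 : @FrechetUrysohnSpace (Mble X) (FTop μ) → @SequentialSpace (Mble X) (FTop μ) :=
    fun h => @FrechetUrysohnSpace.to_sequentialSpace _ (FTop μ) h
  have h3 := seq_hemi μ hpos hsub
  exact ⟨⟨h1, fun h => h3 (h2 h)⟩, ⟨fun h => h2 (h1 h), h3⟩⟩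
end
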